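/- For every λ-term M, H_r(T_r(M)) = T_r(H(M)), where H_r(T_r(M)) = { H_r(a) | a ∈ T_r(M) and H_r(a) ≠ 0 }; that is, head-reduction commutes with rigid expansion. -/

import Mathlib

/-! Ordinary λ-terms, in de Bruijn notation. -/
inductive Lam : Type
  | var : ℕ → Lam
  | lam : Lam → Lam
  | app : Lam → Lam → Lam
  deriving DecidableEq

namespace Lam

/-- Shift the free indices `≥ d` up by one. -/
def lift (d : ℕ) : Lam → Lam
  | var n => if n < d then var n else var (n + 1)
  | lam M => lam (lift (d + 1) M)
  | app P Q => app (lift d P) (lift d Q)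

/-- Capture-avoiding substitution of `N` for the free variable `k`. -/
def subst : Lam → ℕ → Lam → Lam
  | var n, k, N => if n = k then N else if k < n then var (n - 1) else var n
  | lam M, k, N => lam (subst M (k + 1) (lift 0 N))
  | app P Q, k, N => app (subst P k N) (subst Q k N)

/-- Number of free occurrences of the variable `k`. -/
def count (k : ℕ) : Lam → ℕ
  | var n => if n = k then 1 else 0
  | lam M => count (k + 1) M
  | app P Q => count k P + count k Q

/-- One-step β-reduction. -/
inductive Beta : Lam → Lam → Prop
  | beta (M N : Lam) : Beta (app (lam M) N) (subst M 0 N)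
  | lam {M M'} : Beta M M' → Beta (lam M) (lam M')
  | appL {P P' Q} : Beta P P' → Beta (app P Q) (app P' Q)
  | appR {P Q Q'} : Beta Q Q' → Beta (app P Q) (app P Q')

/-- The head of the application spine is a variable, with no λ on the spine. -/
def neutral : Lam → Bool
  | var _ => true
  | lam _ => false
  | app P _ => neutral P

/-- Head-normal forms: `λx₁…λxₘ. x N₁ … Nₙ`. -/
def isHNF : Lam → Prop
  | var _ => True
  | lam M => isHNF M
  | app P _ => neutral P = true

/-- The head-reduction function `H`: contracts the head redex, identity on head-normal
forms. -/
def H : Lam → Lam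
  | var n => var n
  | lam M => lam (H M)
  | app (lam P) Q => subst P 0 Q
  | app (var n) Q => app (var n) Q
  | app (app P₁ P₂) Q => app (H (app P₁ P₂)) Q

/-- The left-parallel reduction function `L`: identity on β-normal forms, propagated to
the arguments on head-normal forms, contraction of the head redex otherwise. -/
def L : Lam → Lam
  | var n => var n
  | lam M => lam (L M)
  | app (lam P) Q => subst P 0 Q
  | app (var n) Q => app (var n) (L Q)
  | app (app P₁ P₂) Q =>
      if neutral (app P₁ P₂) then app (L (app P₁ P₂)) (L Q)
      else app (L (app P₁ P₂)) Q

/-- Iterated application `M N₁ … Nₙ`. -/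
def mkApps (M : Lam) (Ns : List Lam) : Lam := Ns.foldl app M

/-- All free variables are `< d`. -/
def ClosedAt (d : ℕ) : Lam → Prop
  | var n => n < d
  | lam M => ClosedAt (d + 1) M
  | app P Q => ClosedAt d P ∧ ClosedAt d Q

/-- `M` is head-normalizable: it β-reduces in finitely many steps to a head-normal form. -/
def HeadNormalizable (M : Lam) : Prop :=
  ∃ N, Relation.ReflTransGen Beta M N ∧ isHNF N

/-- `M` is a β-normal form: it contains no β-redex, i.e. admits no β-step. -/
def BetaNF (M : Lam) : Prop := ¬∃ N, Beta M N

/-- `M` is β-normalizable: it β-reduces in finitely many steps to a β-normal form. -/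
def BetaNormalizable (M : Lam) : Prop :=
  ∃ N, Relation.ReflTransGen Beta M N ∧ BetaNF N

/-- `M` is strongly β-normalizable: no infinite β-reduction sequence starts from `M`. -/
def StronglyNormalizable (M : Lam) : Prop := Acc (fun N M' => Beta M' N) M

end Lam

/-! Rigid resource terms (the nonzero ones), in de Bruijn notation:
`a ::= x | λx.a | ⟨c⟩d⃗` with `d⃗` a list of rigid terms.
The term `0` is represented by `none : Option Rig`. -/
inductive Rig : Type
  | var : ℕ → Rig
  | lam : Rig → Rig
  | app : Rig → List Rig → Rig

namespace Rig

mutual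
/-- Number of free occurrences of the variable `k` in a rigid term. -/
def countR (k : ℕ) : Rig → ℕ
  | var n => if n = k then 1 else 0
  | lam a => countR (k + 1) a
  | app c ds => countR k c + countRList k ds
termination_by a => sizeOf a

def countRList (k : ℕ) : List Rig → ℕ
  | [] => 0
  | d :: ds => countR k d + countRList k ds
termination_by ds => sizeOf ds
end

mutual
/-- Shift the free indices `≥ d` up by one. -/
def liftR (d : ℕ) : Rig → Rig
  | var n => if n < d then var n else var (n + 1)
  | lam a => lam (liftR (d + 1) a)
  | app c ds => app (liftR d c) (liftRList d ds)
termination_by a => sizeOf a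

def liftRList (d : ℕ) : List Rig → List Rig
  | [] => []
  | a :: as => liftR d a :: liftRList d as
termination_by as => sizeOf as
end

mutual
/-- Rigid substitution `a[b⃗/k]`: the list `b⃗` is distributed, in order, over the
free occurrences of the variable `k`; the result is `none` (i.e. `0`) when
`|b⃗| ≠ n_k(a)`. -/
def rsubst (k : ℕ) : Rig → List Rig → Option Rig
  | var n, bs =>
      if n = k then (match bs with | [b] => some b | _ => none)
      else (match bs with
            | [] => some (if k < n then var (n - 1) else var n)
            | _ => none)
  | lam a, bs => (rsubst (k + 1) a (liftRList 0 bs)).map lam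
  | app c ds, bs =>
      match rsubst k c (bs.take (countR k c)), rsubstList k ds (bs.drop (countR k c)) with
      | some c', some ds' => some (app c' ds')
      | _, _ => none
termination_by a _ => sizeOf a

def rsubstList (k : ℕ) : List Rig → List Rig → Option (List Rig)
  | [], bs => if bs.isEmpty then some [] else none
  | d :: ds, bs =>
      match rsubst k d (bs.take (countR k d)), rsubstList k ds (bs.drop (countR k d)) with
      | some d', some ds' => some (d' :: ds')
      | _, _ => none
termination_by ds _ => sizeOf ds
end

/-- One-step rigid resource reduction `→_r` (contextual closure of
`⟨λx.a⟩b⃗ →_r a[b⃗/x]`); the result may be `0` (i.e. `none`), which annihilates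
the surrounding context. -/
inductive RStep : Rig → Option Rig → Prop
  | beta (a : Rig) (bs : List Rig) : RStep (app (lam a) bs) (rsubst 0 a bs)
  | lam {a r} : RStep a r → RStep (lam a) (r.map lam)
  | head {c r} (ds : List Rig) : RStep c r → RStep (app c ds) (r.map (fun c' => app c' ds))
  | arg {d r} (c : Rig) (ds₁ ds₂ : List Rig) :
      RStep d r → RStep (app c (ds₁ ++ d :: ds₂)) (r.map (fun d' => app c (ds₁ ++ d' :: ds₂)))

/-- `→_r` on rigid terms extended with `0`; `0` is inert. -/
inductive RStepO : Option Rig → Option Rig → Prop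
  | mk {a r} : RStep a r → RStepO (some a) r

/-- `r` is a `→_r`-normal form (`0` is one). -/
def RNormal (r : Option Rig) : Prop := ¬∃ r', RStepO r r'

/-- The head of the application spine is a variable, with no λ on the spine. -/
def rNeutral : Rig → Bool
  | var _ => true
  | lam _ => false
  | app c _ => rNeutral c

/-- Rigid head-normal forms among nonzero terms: `λx₁…λxₘ.⟨…⟨x⟩d⃗₁…⟩d⃗ₙ`
(the term `0` is a head-normal form, but it is treated separately). -/
def rIsHNF : Rig → Prop
  | var _ => True
  | lam a => rIsHNF a
  | app c _ => rNeutral c = true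

/-- The rigid head-reduction function `H_r`: contracts the head redex, identity on
head-normal forms; the result may be `0` (i.e. `none`). -/
def Hr : Rig → Option Rig
  | var n => some (var n)
  | lam a => (Hr a).map lam
  | app (lam a) bs => rsubst 0 a bs
  | app (var n) ds => some (app (var n) ds)
  | app (app c₁ c₂) ds => (Hr (app c₁ c₂)).map (fun c' => app c' ds)

/-- `H_r` extended to terms-or-`0`. -/
def HrO : Option Rig → Option Rig := fun r => r.bind Hr

mutual
/-- The rigid left-parallel reduction function `L_r`: identity on `→_r`-normal forms,
applied componentwise to the argument lists on head-normal forms, contraction of the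
head redex otherwise; the result may be `0` (i.e. `none`). -/
def Lr : Rig → Option Rig
  | var n => some (var n)
  | lam a => (Lr a).map lam
  | app (lam a) bs => rsubst 0 a bs
  | app (var n) ds => (LrList ds).map (fun ds' => app (var n) ds')
  | app (app c₁ c₂) ds =>
      if rNeutral (app c₁ c₂) then
        match Lr (app c₁ c₂), LrList ds with
        | some c', some ds' => some (app c' ds')
        | _, _ => none
      else (Lr (app c₁ c₂)).map (fun c' => app c' ds)
termination_by a => sizeOf a

def LrList : List Rig → Option (List Rig)
  | [] => some []
  | d :: ds =>
      match Lr d, LrList ds with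
      | some d', some ds' => some (d' :: ds')
      | _, _ => none
termination_by ds => sizeOf ds
end

/-- `L_r` extended to terms-or-`0`. -/
def LrO : Option Rig → Option Rig := fun r => r.bind Lr

/-- Positive resource terms: no empty list/multiset occurs as the argument of an
application. -/
inductive rPositive : Rig → Prop
  | var (n : ℕ) : rPositive (var n)
  | lam {a} : rPositive a → rPositive (lam a)
  | app {c : Rig} {ds : List Rig} :
      rPositive c → ds ≠ [] → (∀ d ∈ ds, rPositive d) → rPositive (app c ds)

end Rig

/-- The rigid expansion `T_r(M)` of a λ-term (equivalently, the support of its Taylor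
expansion, with multisets presented by lists: `Texp M` is closed under permutation of
argument lists). -/
def Texp : Lam → Set Rig
  | Lam.var n => {Rig.var n}
  | Lam.lam M => {a | ∃ b ∈ Texp M, a = Rig.lam b}
  | Lam.app P Q => {a | ∃ c ∈ Texp P, ∃ ds : List Rig, (∀ d ∈ ds, d ∈ Texp Q) ∧ a = Rig.app c ds}

namespace Rig

/-- The support of the `n`-linear substitution `∂_k a · b̄`, where the multiset `b̄` is
presented by the list `bs`: the finite formal sum (multiset) of all nonzero results of
rigid substitutions along bijective assignments, i.e. permutations of `bs`. -/
def permSubst (k : ℕ) (a : Rig) (bs : List Rig) : Multiset Rig :=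
  ↑(bs.permutations.filterMap (fun bs' => rsubst k a bs'))

/-- One step of non-erasing ε-resource reduction `→^{¬e}_{∂ε}` out of a single resource
term, producing a finite formal sum (a multiset) of resource terms: non-erasing resource
β-steps `⟨λx.a⟩b̄ → ∂_x a · b̄` (with `x ∈ FV(a)`) and resource σ₁-steps, under any
context. -/
inductive NEStep : Rig → Multiset Rig → Prop
  | beta {a : Rig} (bs : List Rig) :
      0 < countR 0 a → NEStep (app (lam a) bs) (permSubst 0 a bs)
  | sigma (a : Rig) (ts qs : List Rig) :
      NEStep (app (app (lam a) ts) qs) {app (lam (app a (liftRList 0 qs))) ts}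
  | lam {a σ} : NEStep a σ → NEStep (lam a) (σ.map lam)
  | head {c σ} (ds : List Rig) : NEStep c σ → NEStep (app c ds) (σ.map (fun c' => app c' ds))
  | arg {d σ} (c : Rig) (ds₁ ds₂ : List Rig) :
      NEStep d σ → NEStep (app c (ds₁ ++ d :: ds₂)) (σ.map (fun d' => app c (ds₁ ++ d' :: ds₂)))

/-- Non-erasing ε-resource reduction on finite formal sums, extended by linearity. -/
def NEStepSum (σ τ : Multiset Rig) : Prop :=
  ∃ (a : Rig) (ρ υ : Multiset Rig), σ = a ::ₘ ρ ∧ NEStep a υ ∧ τ = υ + ρ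

/-- `σ` is a `→^{¬e}_{∂ε}`-normal form. -/
def NENormal (σ : Multiset Rig) : Prop := ¬∃ τ, NEStepSum σ τ

end Rig

/-- One step of non-erasing ε-reduction on λ-terms: non-erasing β-steps
`(λx.M)N → M[N/x]` (with `x ∈ FV(M)`) together with σ₁-steps
`((λx.M)N)P → (λx.MP)N` (`x ∉ FV(P)`), under any context. -/
inductive NEeps : Lam → Lam → Prop
  | beta {M : Lam} (N : Lam) :
      0 < Lam.count 0 M → NEeps (Lam.app (Lam.lam M) N) (Lam.subst M 0 N)
  | sigma (M N P : Lam) :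
      NEeps (Lam.app (Lam.app (Lam.lam M) N) P)
        (Lam.app (Lam.lam (Lam.app M (Lam.lift 0 P))) N)
  | lam {M M'} : NEeps M M' → NEeps (Lam.lam M) (Lam.lam M')
  | appL {P P' Q} : NEeps P P' → NEeps (Lam.app P Q) (Lam.app P' Q)
  | appR {P Q Q'} : NEeps Q Q' → NEeps (Lam.app P Q) (Lam.app P Q')

/-- The set `S` of λ-terms. -/
inductive SLam : Lam → Prop
  | varApp (n : ℕ) (Ms : List Lam) :
      (∀ M ∈ Ms, SLam M) → SLam (Lam.mkApps (Lam.var n) Ms)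
  | lam {M} : SLam M → SLam (Lam.lam M)
  | redex (M₀ M₁ : Lam) (Ms : List Lam) :
      SLam M₁ → SLam (Lam.mkApps (Lam.subst M₀ 0 M₁) Ms) →
      SLam (Lam.mkApps (Lam.app (Lam.lam M₀) M₁) Ms)

/-- λI-terms: every abstraction binds a variable occurring free in its body. -/
def LamI : Lam → Prop
  | Lam.var _ => True
  | Lam.lam M => LamI M ∧ 0 < Lam.count 0 M
  | Lam.app P Q => LamI P ∧ LamI Q

/-!
The heart of the proof is that rigid expansion commutes with substitution:
`T_r(M[N/x]) = { a[b⃗/x] ≠ 0 | a ∈ T_r(M), b⃗ a list over T_r(N) }`.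
A nonzero `a[b⃗/x]` forces `|b⃗| = n_x(a)`, so distributing `b⃗` over the immediate subterms of an
application by their occurrence counts is the same as splitting `b⃗` in an arbitrary way that makes
every partial result nonzero. Hence substituting into an application and substituting into its
parts independently produce the same rigid terms. Head reduction then only has to be followed down
the spine to the head redex.
-/

section Lists

variable {α β : Type*}

/-- The lists with all entries in `S`, i.e. the argument lists `d⃗` that the rigid expansion
allows when `S = T_r(Q)`. -/
def listsOver (S : Set α) : Set (List α) := {l | ∀ x ∈ l, x ∈ S}

theorem nil_mem_listsOver {S : Set α} : [] ∈ listsOver S := List.forall_mem_nil _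

theorem cons_mem_listsOver {S : Set α} {x : α} {l : List α} :
    x :: l ∈ listsOver S ↔ x ∈ S ∧ l ∈ listsOver S :=
  List.forall_mem_cons

theorem append_mem_listsOver {S : Set α} {l₁ l₂ : List α} :
    l₁ ++ l₂ ∈ listsOver S ↔ l₁ ∈ listsOver S ∧ l₂ ∈ listsOver S :=
  List.forall_mem_append

theorem listsOver_image (f : α → β) (S : Set α) :
    listsOver (f '' S) = List.map f '' listsOver S := by
  ext l
  induction l with
  | nil => simp [nil_mem_listsOver]
  | cons y l ih =>
    simp only [cons_mem_listsOver, ih, Set.mem_image, List.map_eq_cons_iff]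
    constructor
    · rintro ⟨⟨x, hx, rfl⟩, xs, hxs, rfl⟩
      exact ⟨x :: xs, cons_mem_listsOver.2 ⟨hx, hxs⟩, x, xs, rfl, rfl, rfl⟩
    · rintro ⟨_, hxs, x, xs, rfl, rfl, rfl⟩
      obtain ⟨hx, hxs⟩ := cons_mem_listsOver.1 hxs
      exact ⟨⟨x, hx, rfl⟩, xs, hxs, rfl⟩

end Lists

namespace Rig

theorem liftRList_eq_map (d : ℕ) (as : List Rig) : liftRList d as = as.map (liftR d) := by
  induction as with
  | nil => simp [liftRList]
  | cons a as ih => simp [liftRList, ih]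

theorem rsubst_var_eq_some {k n : ℕ} {bs : List Rig} {r : Rig} :
    rsubst k (var n) bs = some r ↔
      (n = k ∧ bs = [r]) ∨ (n ≠ k ∧ bs = [] ∧ r = if k < n then var (n - 1) else var n) := by
  rcases eq_or_ne n k with h | h <;>
    rcases bs with _ | ⟨b, _ | ⟨b', bs⟩⟩ <;> simp [rsubst, h, eq_comm]

theorem rsubst_lam (k : ℕ) (a : Rig) (bs : List Rig) :
    rsubst k (lam a) bs = (rsubst (k + 1) a (bs.map (liftR 0))).map lam := by
  rw [rsubst, liftRList_eq_map]

theorem rsubst_app (k : ℕ) (c : Rig) (ds bs : List Rig) :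
    rsubst k (app c ds) bs =
      Option.map₂ app (rsubst k c (bs.take (countR k c)))
        (rsubstList k ds (bs.drop (countR k c))) := by
  rw [rsubst]
  cases rsubst k c (bs.take (countR k c)) <;>
    cases rsubstList k ds (bs.drop (countR k c)) <;> rfl

theorem rsubstList_nil_eq_some {k : ℕ} {bs rs : List Rig} :
    rsubstList k [] bs = some rs ↔ bs = [] ∧ rs = [] := by
  cases bs <;> simp [rsubstList, eq_comm]

theorem rsubstList_cons (k : ℕ) (d : Rig) (ds bs : List Rig) :
    rsubstList k (d :: ds) bs =
      Option.map₂ List.cons (rsubst k d (bs.take (countR k d)))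
        (rsubstList k ds (bs.drop (countR k d))) := by
  rw [rsubstList]
  cases rsubst k d (bs.take (countR k d)) <;>
    cases rsubstList k ds (bs.drop (countR k d)) <;> rfl

mutual

theorem length_eq_countR_of_rsubst_eq_some {k : ℕ} :
    ∀ {a : Rig} {bs : List Rig} {r : Rig}, rsubst k a bs = some r → bs.length = countR k a
  | var n, bs, r, h => by
    rcases rsubst_var_eq_some.1 h with ⟨hn, rfl⟩ | ⟨hn, rfl, -⟩ <;> simp [countR, hn]
  | lam a, bs, r, h => by
    rw [rsubst_lam, Option.map_eq_some_iff] at h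
    obtain ⟨r', h', -⟩ := h
    simpa [countR] using length_eq_countR_of_rsubst_eq_some h'
  | app c ds, bs, r, h => by
    rw [rsubst_app, Option.map₂_eq_some_iff] at h
    obtain ⟨c', ds', hc, hds, -⟩ := h
    rw [countR, ← length_eq_countR_of_rsubst_eq_some hc,
      ← length_eq_countRList_of_rsubstList_eq_some hds, ← List.length_append, List.take_append_drop]
termination_by a => sizeOf a

theorem length_eq_countRList_of_rsubstList_eq_some {k : ℕ} :
    ∀ {ds bs rs : List Rig}, rsubstList k ds bs = some rs → bs.length = countRList k ds
  | [], bs, rs, h => by simp [(rsubstList_nil_eq_some.1 h).1, countRList]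
  | d :: ds, bs, rs, h => by
    rw [rsubstList_cons, Option.map₂_eq_some_iff] at h
    obtain ⟨d', ds', hd, hds, -⟩ := h
    rw [countRList, ← length_eq_countR_of_rsubst_eq_some hd,
      ← length_eq_countRList_of_rsubstList_eq_some hds, ← List.length_append, List.take_append_drop]
termination_by ds => sizeOf ds

end

theorem rsubst_take_and_drop_iff {k : ℕ} {c r : Rig} {bs : List Rig} {p : List Rig → Prop} :
    rsubst k c (bs.take (countR k c)) = some r ∧ p (bs.drop (countR k c)) ↔
      ∃ bs₁ bs₂, bs = bs₁ ++ bs₂ ∧ rsubst k c bs₁ = some r ∧ p bs₂ := by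
  constructor
  · rintro ⟨hc, hp⟩
    exact ⟨_, _, (List.take_append_drop _ _).symm, hc, hp⟩
  · rintro ⟨bs₁, bs₂, rfl, hc, hp⟩
    rw [← length_eq_countR_of_rsubst_eq_some hc, List.take_left, List.drop_left]
    exact ⟨hc, hp⟩

theorem rsubst_app_eq_some {k : ℕ} {c : Rig} {ds bs : List Rig} {r : Rig} :
    rsubst k (app c ds) bs = some r ↔
      ∃ c' ds', (∃ bs₁ bs₂, bs = bs₁ ++ bs₂ ∧
        rsubst k c bs₁ = some c' ∧ rsubstList k ds bs₂ = some ds') ∧ app c' ds' = r := by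
  simp only [rsubst_app, Option.map₂_eq_some_iff, Option.mem_def, ← rsubst_take_and_drop_iff,
    and_assoc]

theorem rsubstList_cons_eq_some {k : ℕ} {d : Rig} {ds bs rs : List Rig} :
    rsubstList k (d :: ds) bs = some rs ↔
      ∃ d' ds', (∃ bs₁ bs₂, bs = bs₁ ++ bs₂ ∧
        rsubst k d bs₁ = some d' ∧ rsubstList k ds bs₂ = some ds') ∧ d' :: ds' = rs := by
  simp only [rsubstList_cons, Option.map₂_eq_some_iff, Option.mem_def, ← rsubst_take_and_drop_iff,
    and_assoc]

/-- Rigid substitution lifted to sets: the nonzero terms `a[b⃗/k]` with `a ∈ A` and `b⃗` a list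
over `B`. -/
def substSet (k : ℕ) (A B : Set Rig) : Set Rig :=
  {r | ∃ a ∈ A, ∃ bs ∈ listsOver B, rsubst k a bs = some r}

theorem substSet_var_self (k : ℕ) (B : Set Rig) : substSet k {var k} B = B := by
  ext r
  simp [substSet, rsubst_var_eq_some, listsOver]

theorem substSet_var_of_ne {k n : ℕ} (h : n ≠ k) (B : Set Rig) :
    substSet k {var n} B = {if k < n then var (n - 1) else var n} := by
  ext r
  simp [substSet, rsubst_var_eq_some, h, nil_mem_listsOver]

theorem substSet_lam (k : ℕ) (A B : Set Rig) :
    substSet k (lam '' A) B = lam '' substSet (k + 1) A (liftR 0 '' B) := by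
  ext r
  simp only [substSet, listsOver_image, Set.exists_mem_image, rsubst_lam, Option.map_eq_some_iff]
  constructor
  · rintro ⟨a, ha, bs, hbs, r', hr', rfl⟩
    exact ⟨r', ⟨a, ha, bs, hbs, hr'⟩, rfl⟩
  · rintro ⟨r', ⟨a, ha, bs, hbs, hr'⟩, rfl⟩
    exact ⟨a, ha, bs, hbs, r', hr', rfl⟩

theorem mem_listsOver_substSet {k : ℕ} {D B : Set Rig} {rs : List Rig} :
    rs ∈ listsOver (substSet k D B) ↔
      ∃ ds ∈ listsOver D, ∃ bs ∈ listsOver B, rsubstList k ds bs = some rs := by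
  induction rs with
  | nil =>
    exact iff_of_true nil_mem_listsOver
      ⟨[], nil_mem_listsOver, [], nil_mem_listsOver, rsubstList_nil_eq_some.2 ⟨rfl, rfl⟩⟩
  | cons r rs ih =>
    rw [cons_mem_listsOver, ih]
    constructor
    · rintro ⟨⟨d, hd, bs₁, hbs₁, hr⟩, ds, hds, bs₂, hbs₂, hrs⟩
      exact ⟨d :: ds, cons_mem_listsOver.2 ⟨hd, hds⟩,
        bs₁ ++ bs₂, append_mem_listsOver.2 ⟨hbs₁, hbs₂⟩,
        rsubstList_cons_eq_some.2 ⟨r, rs, ⟨bs₁, bs₂, rfl, hr, hrs⟩, rfl⟩⟩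
    · rintro ⟨_ | ⟨d, ds⟩, hds, bs, hbs, h⟩
      · cases (rsubstList_nil_eq_some.1 h).2
      · obtain ⟨_, _, ⟨bs₁, bs₂, rfl, hr, hrs⟩, ⟨⟩⟩ := rsubstList_cons_eq_some.1 h
        obtain ⟨hd, hds⟩ := cons_mem_listsOver.1 hds
        obtain ⟨hbs₁, hbs₂⟩ := append_mem_listsOver.1 hbs
        exact ⟨⟨d, hd, bs₁, hbs₁, hr⟩, ds, hds, bs₂, hbs₂, hrs⟩

theorem substSet_app (k : ℕ) (C D B : Set Rig) :
    substSet k (Set.image2 app C (listsOver D)) B =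
      Set.image2 app (substSet k C B) (listsOver (substSet k D B)) := by
  ext r
  constructor
  · rintro ⟨_, ⟨c, hc, ds, hds, rfl⟩, bs, hbs, h⟩
    obtain ⟨c', ds', ⟨bs₁, bs₂, rfl, hc', hds'⟩, rfl⟩ := rsubst_app_eq_some.1 h
    obtain ⟨hbs₁, hbs₂⟩ := append_mem_listsOver.1 hbs
    exact ⟨c', ⟨c, hc, bs₁, hbs₁, hc'⟩, ds', mem_listsOver_substSet.2 ⟨ds, hds, bs₂, hbs₂, hds'⟩,
      rfl⟩
  · rintro ⟨c', ⟨c, hc, bs₁, hbs₁, hc'⟩, ds', hds', rfl⟩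
    obtain ⟨ds, hds, bs₂, hbs₂, hds'⟩ := mem_listsOver_substSet.1 hds'
    exact ⟨app c ds, Set.mem_image2_of_mem hc hds,
      bs₁ ++ bs₂, append_mem_listsOver.2 ⟨hbs₁, hbs₂⟩,
      rsubst_app_eq_some.2 ⟨c', ds', ⟨bs₁, bs₂, rfl, hc', hds'⟩, rfl⟩⟩

/-- Rigid head reduction lifted to sets: the nonzero terms `H_r(a)` with `a ∈ A`. -/
def headReducts (A : Set Rig) : Set Rig := {b | ∃ a ∈ A, Hr a = some b}

theorem headReducts_var (n : ℕ) : headReducts {var n} = {var n} := by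
  ext b
  simp [headReducts, Hr, eq_comm]

theorem headReducts_lam (A : Set Rig) : headReducts (lam '' A) = lam '' headReducts A := by
  ext b
  simp only [headReducts, Set.exists_mem_image, Hr, Option.map_eq_some_iff]
  constructor
  · rintro ⟨a, ha, b', hb', rfl⟩
    exact ⟨b', ⟨a, ha, hb'⟩, rfl⟩
  · rintro ⟨b', ⟨a, ha, hb'⟩, rfl⟩
    exact ⟨a, ha, b', hb', rfl⟩

theorem headReducts_redex (A B : Set Rig) :
    headReducts (Set.image2 app (lam '' A) (listsOver B)) = substSet 0 A B := by
  simp only [headReducts, substSet, Set.image2_image_left, Set.exists_mem_image2, Hr]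

theorem Hr_app_of_ne_lam {c : Rig} (hc : ∀ a, c ≠ lam a) (ds : List Rig) :
    Hr (app c ds) = (Hr c).map (app · ds) := by
  cases c with
  | var n => rfl
  | lam a => exact absurd rfl (hc a)
  | app c₁ c₂ => rfl

theorem headReducts_app_of_ne_lam {C : Set Rig} (hC : ∀ c ∈ C, ∀ a, c ≠ lam a)
    (D : Set (List Rig)) :
    headReducts (Set.image2 app C D) = Set.image2 app (headReducts C) D := by
  ext b
  constructor
  · rintro ⟨_, ⟨c, hc, ds, hds, rfl⟩, h⟩
    rw [Hr_app_of_ne_lam (hC c hc), Option.map_eq_some_iff] at h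
    obtain ⟨c', hc', rfl⟩ := h
    exact ⟨c', ⟨c, hc, hc'⟩, ds, hds, rfl⟩
  · rintro ⟨c', ⟨c, hc, hc'⟩, ds, hds, rfl⟩
    refine ⟨app c ds, Set.mem_image2_of_mem hc hds, ?_⟩
    rw [Hr_app_of_ne_lam (hC c hc), hc', Option.map_some]

end Rig

theorem Lam.H_app_of_ne_lam {P : Lam} (hP : ∀ M, P ≠ lam M) (Q : Lam) :
    H (app P Q) = app (H P) Q := by
  cases P with
  | var n => rfl
  | lam M => exact absurd rfl (hP M)
  | app P₁ P₂ => rfl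

theorem Texp_var (n : ℕ) : Texp (Lam.var n) = {Rig.var n} := rfl

theorem Texp_lam (M : Lam) : Texp (Lam.lam M) = Rig.lam '' Texp M := by
  ext a
  simp only [Texp, Set.mem_image, eq_comm]
  rfl

theorem Texp_app (P Q : Lam) :
    Texp (Lam.app P Q) = Set.image2 Rig.app (Texp P) (listsOver (Texp Q)) := by
  ext a
  simp only [Texp, Set.mem_image2, eq_comm]
  rfl

theorem ne_lam_of_mem_Texp {P : Lam} (hP : ∀ M, P ≠ Lam.lam M) :
    ∀ c ∈ Texp P, ∀ a, c ≠ Rig.lam a := by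
  rintro _ hc a rfl
  cases P with
  | var n => cases hc
  | lam M => exact hP M rfl
  | app P Q => obtain ⟨_, _, _, _, ⟨⟩⟩ := hc

theorem Texp_lift (N : Lam) (d : ℕ) : Texp (Lam.lift d N) = Rig.liftR d '' Texp N := by
  induction N generalizing d with
  | var n => by_cases h : n < d <;> simp [Lam.lift, Texp_var, Rig.liftR, h]
  | lam M ih => simp only [Lam.lift, Texp_lam, ih, Set.image_image, Rig.liftR]
  | app P Q ihP ihQ =>
    simp only [Lam.lift, Texp_app, ihP, ihQ, listsOver_image, Set.image2_image_left,
      Set.image2_image_right, Set.image_image2, Rig.liftR, Rig.liftRList_eq_map]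

theorem Texp_subst (M : Lam) (k : ℕ) (N : Lam) :
    Texp (Lam.subst M k N) = Rig.substSet k (Texp M) (Texp N) := by
  induction M generalizing k N with
  | var n =>
    rcases eq_or_ne n k with rfl | h
    · simp only [Lam.subst, if_true, Texp_var, Rig.substSet_var_self]
    · simp only [Lam.subst, if_neg h, apply_ite Texp, Texp_var, Rig.substSet_var_of_ne h,
        apply_ite (singleton : Rig → Set Rig)]
  | lam M ih => rw [Lam.subst, Texp_lam, Texp_lam, ih, Texp_lift, Rig.substSet_lam]
  | app P Q ihP ihQ => rw [Lam.subst, Texp_app, Texp_app, ihP, ihQ, Rig.substSet_app]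

/-- `H_r(T_r(M)) = T_r(H(M))`, where
`H_r(T_r(M)) = { H_r(a) | a ∈ T_r(M), H_r(a) ≠ 0 }`: head reduction commutes with
rigid expansion. -/
theorem head_reduction_commutes_with_Texp (M : Lam) :
    {b : Rig | ∃ a ∈ Texp M, Rig.Hr a = some b} = Texp (Lam.H M) := by
  change Rig.headReducts (Texp M) = Texp (Lam.H M)
  induction M with
  | var n => exact Rig.headReducts_var n
  | lam M ih => rw [Lam.H, Texp_lam, Texp_lam, Rig.headReducts_lam, ih]
  | app P Q ih _ =>
    by_cases hP : ∃ M, P = Lam.lam M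
    · obtain ⟨M, rfl⟩ := hP
      rw [Lam.H, Texp_subst, Texp_app, Texp_lam, Rig.headReducts_redex]
    · replace hP : ∀ M, P ≠ Lam.lam M := not_exists.1 hP
      rw [Lam.H_app_of_ne_lam hP, Texp_app, Texp_app,
        Rig.headReducts_app_of_ne_lam (ne_lam_of_mem_Texp hP), ih]
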